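/- (No movers) Under the IV assumptions (Independence, Relevance, Monotonicity, Exclusion), if additionally μ({C1,N2}) = μ({C1,A2}) = μ({N1,C2}) = μ({A1,C2}) = 0, then μ({C1,C2}) > 0 and for each D ∈ {D1, D2, D∧, D∨}, the IV estimand satisfies ΔE[Y|Z]/ΔE[D|Z] = E[Y(1,1)−Y(0,0) | {C1,C2}]. (Corollary 1) -/

import Mathlib

open MeasureTheory ProbabilityTheory

noncomputable section

variable {Ω : Type*} [MeasurableSpace Ω]

/-- Observed first-part treatment: `D1 = D1(1)·Z + D1(0)·(1−Z)`. -/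
def obsD1 (Z : Ω → ℝ) (D1 : Bool → Ω → ℝ) (ω : Ω) : ℝ :=
  D1 true ω * Z ω + D1 false ω * (1 - Z ω)

/-- Observed second-part treatment. -/
def obsD2 (Z : Ω → ℝ) (D1 : Bool → Ω → ℝ) (D2 : Bool → Bool → Ω → ℝ) (ω : Ω) : ℝ :=
  (D2 true true ω * obsD1 Z D1 ω + D2 true false ω * (1 - obsD1 Z D1 ω)) * Z ω +
  (D2 false true ω * obsD1 Z D1 ω + D2 false false ω * (1 - obsD1 Z D1 ω)) * (1 - Z ω)

/-- Summary treatment `D∧ = D1·D2`. -/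
def obsDand (Z : Ω → ℝ) (D1 : Bool → Ω → ℝ) (D2 : Bool → Bool → Ω → ℝ) (ω : Ω) : ℝ :=
  obsD1 Z D1 ω * obsD2 Z D1 D2 ω

/-- Summary treatment `D∨ = D1 + D2 − D1·D2`. -/
def obsDor (Z : Ω → ℝ) (D1 : Bool → Ω → ℝ) (D2 : Bool → Bool → Ω → ℝ) (ω : Ω) : ℝ :=
  obsD1 Z D1 ω + obsD2 Z D1 D2 ω - obsD1 Z D1 ω * obsD2 Z D1 D2 ω

/-- Observed outcome `Y = Σ_{d1,d2} Y(Z,d1,d2)·1{D1=d1, D2=d2}`, written out using that the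
observed treatments and the instrument are {0,1}-valued. The first index of `Yp` is `z`, the
second is `d1`, the third is `d2`. -/
def obsY (Z : Ω → ℝ) (D1 : Bool → Ω → ℝ) (D2 : Bool → Bool → Ω → ℝ)
    (Yp : Bool → Bool → Bool → Ω → ℝ) (ω : Ω) : ℝ :=
  (Yp true true true ω * obsD1 Z D1 ω * obsD2 Z D1 D2 ω +
   Yp true false true ω * (1 - obsD1 Z D1 ω) * obsD2 Z D1 D2 ω +
   Yp true true false ω * obsD1 Z D1 ω * (1 - obsD2 Z D1 D2 ω) +
   Yp true false false ω * (1 - obsD1 Z D1 ω) * (1 - obsD2 Z D1 D2 ω)) * Z ω +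
  (Yp false true true ω * obsD1 Z D1 ω * obsD2 Z D1 D2 ω +
   Yp false false true ω * (1 - obsD1 Z D1 ω) * obsD2 Z D1 D2 ω +
   Yp false true false ω * obsD1 Z D1 ω * (1 - obsD2 Z D1 D2 ω) +
   Yp false false false ω * (1 - obsD1 Z D1 ω) * (1 - obsD2 Z D1 D2 ω)) * (1 - Z ω)

/-- `ΔE[A|Z] := E[A | Z = 1] − E[A | Z = 0]`, expectations under conditional measures. -/
def dE (μ : Measure Ω) (Z A : Ω → ℝ) : ℝ :=
  (∫ ω, A ω ∂(μ[|Z ⁻¹' {1}])) - (∫ ω, A ω ∂(μ[|Z ⁻¹' {0}]))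

/-- The full-complier event `{C1,C2}`. -/
def CCev (D1 : Bool → Ω → ℝ) (D2 : Bool → Bool → Ω → ℝ) : Set Ω :=
  {ω | D1 true ω - D1 false ω = 1 ∧ D2 true true ω - D2 false false ω = 1}

/-- The mover event `{C1,N2}`. -/
def CNev (D1 : Bool → Ω → ℝ) (D2 : Bool → Bool → Ω → ℝ) : Set Ω :=
  {ω | D1 true ω - D1 false ω = 1 ∧ D2 true true ω = 0 ∧ D2 false false ω = 0}

/-- The mover event `{C1,A2}`. -/
def CAev (D1 : Bool → Ω → ℝ) (D2 : Bool → Bool → Ω → ℝ) : Set Ω :=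
  {ω | D1 true ω - D1 false ω = 1 ∧ D2 true true ω = 1 ∧ D2 false false ω = 1}

/-- The mover event `{N1,C2}`. -/
def NCev (D1 : Bool → Ω → ℝ) (D2 : Bool → Bool → Ω → ℝ) : Set Ω :=
  {ω | D1 true ω = 0 ∧ D1 false ω = 0 ∧ D2 true false ω - D2 false false ω = 1}

/-- The mover event `{A1,C2}`. -/
def ACev (D1 : Bool → Ω → ℝ) (D2 : Bool → Bool → Ω → ℝ) : Set Ω :=
  {ω | D1 true ω = 1 ∧ D1 false ω = 1 ∧ D2 true true ω - D2 false true ω = 1}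

/-!
Since the four mover events are null, almost every unit either is a full complier, whose treatments
`(d1, d2)` switch from `(0, 0)` to `(1, 1)` with the instrument, or has treatments that do not
respond to it. By exclusion, the reduced form `ΔE[Y|Z]` is therefore the integral of
`Y(1,1) − Y(0,0)` over the full compliers. A treatment `δ(D1, D2)` is itself the observed outcome of
the deterministic potential outcomes `y(d1,d2) = δ(d1,d2)`, so the first stages need no separate
argument: when `δ(0,0) = 0` and `δ(1,1) = 1`, which holds for all four treatments, the same formula
yields the mass of the full compliers.
-/

section ConditionalExpectation

variable {β : Type*} [MeasurableSpace β] {μ : Measure Ω} [IsFiniteMeasure μ]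

lemma identDistrib_cond_of_indepFun {γ : Type*} [MeasurableSpace γ] {A : Ω → γ} {Z : Ω → β}
    {s : Set β} (hA : AEMeasurable A μ) (hZ : Measurable Z) (hAZ : IndepFun A Z μ)
    (hs : MeasurableSet s) (hpos : μ (Z ⁻¹' s) ≠ 0) : IdentDistrib A A (μ[|Z ⁻¹' s]) μ where
  aemeasurable_fst := hA.mono_ac cond_absolutelyContinuous
  aemeasurable_snd := hA
  map_eq := by
    ext t ht
    rw [Measure.map_apply_of_aemeasurable (hA.mono_ac cond_absolutelyContinuous) ht,
      Measure.map_apply_of_aemeasurable hA ht, cond_apply (hZ hs), Set.inter_comm,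
      hAZ.measure_inter_preimage_eq_mul t s ht hs, mul_comm (μ (A ⁻¹' t)), ← mul_assoc,
      ENNReal.inv_mul_cancel hpos (measure_ne_top _ _), one_mul]

lemma integral_cond_preimage_singleton [MeasurableSingletonClass β] {E : Type*}
    [NormedAddCommGroup E] [NormedSpace ℝ E] [MeasurableSpace E] [BorelSpace E] {A P : Ω → E}
    {Z : Ω → β} {z : β} (hP : AEMeasurable P μ) (hZ : Measurable Z) (hPZ : IndepFun P Z μ)
    (hpos : μ (Z ⁻¹' {z}) ≠ 0) (hAP : ∀ ω, Z ω = z → A ω = P ω) :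
    ∫ ω, A ω ∂(μ[|Z ⁻¹' {z}]) = ∫ ω, P ω ∂μ := by
  have hz : MeasurableSet {z} := measurableSet_singleton z
  calc ∫ ω, A ω ∂(μ[|Z ⁻¹' {z}])
      = ∫ ω, P ω ∂(μ[|Z ⁻¹' {z}]) := integral_congr_ae (ae_cond_of_forall_mem (hZ hz) hAP)
    _ = ∫ ω, P ω ∂μ := (identDistrib_cond_of_indepFun hP hZ hPZ hz hpos).integral_eq

lemma dE_eq_integral_sub {Z A : Ω → ℝ} {P : Bool → Ω → ℝ} (hZ : Measurable Z)
    (hpos : ∀ z : Bool, μ (Z ⁻¹' {(z.toNat : ℝ)}) ≠ 0)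
    (hAP : ∀ (z : Bool) (ω), Z ω = z.toNat → A ω = P z ω)
    (hP : ∀ z, Integrable (P z) μ) (hPZ : ∀ z, IndepFun (P z) Z μ) :
    dE μ Z A = ∫ ω, (P true ω - P false ω) ∂μ := by
  have hcond (z : Bool) : ∫ ω, A ω ∂(μ[|Z ⁻¹' {(z.toNat : ℝ)}]) = ∫ ω, P z ω ∂μ :=
    integral_cond_preimage_singleton (hP z).aemeasurable hZ (hPZ z) (hpos z) (hAP z)
  simpa [dE, integral_sub (hP true) (hP false)] using
    congr_arg₂ (· - ·) (hcond true) (hcond false)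

end ConditionalExpectation

/-- The potential second treatment `D2(z, D1(z))` under assignment `z`. -/
def potD2 (D1 : Bool → Ω → ℝ) (D2 : Bool → Bool → Ω → ℝ) (z : Bool) (ω : Ω) : ℝ :=
  D2 z true ω * D1 z ω + D2 z false ω * (1 - D1 z ω)

/-- The potential outcome `Y(z, D1(z), D2(z, D1(z)))` under assignment `z`, with the choice among
the four values `Y(z, d1, d2)` encoded as a polynomial in the treatments, as in `obsY`. -/
def potY (D1 : Bool → Ω → ℝ) (D2 : Bool → Bool → Ω → ℝ) (Yp : Bool → Bool → Bool → Ω → ℝ)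
    (z : Bool) (ω : Ω) : ℝ :=
  Yp z true true ω * D1 z ω * potD2 D1 D2 z ω +
  Yp z false true ω * (1 - D1 z ω) * potD2 D1 D2 z ω +
  Yp z true false ω * D1 z ω * (1 - potD2 D1 D2 z ω) +
  Yp z false false ω * (1 - D1 z ω) * (1 - potD2 D1 D2 z ω)

/-- A unit that is not a mover: either a full complier, taking both treatments exactly when assigned
to them, or a unit whose treatments are the same under both assignments. -/
def IsNonMover (D1 : Bool → Ω → ℝ) (D2 : Bool → Bool → Ω → ℝ) (ω : Ω) : Prop :=
  (∀ z : Bool, D1 z ω = z.toNat ∧ potD2 D1 D2 z ω = z.toNat) ∨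
  (D1 true ω = D1 false ω ∧ potD2 D1 D2 true ω = potD2 D1 D2 false ω)

/-- The treatment `δ(D1, D2)` viewed as a deterministic potential outcome. -/
def treatmentOutcome (δ : Bool → Bool → Bool) (_z d1 d2 : Bool) (_ω : Ω) : ℝ :=
  (δ d1 d2).toNat

section Pointwise

omit [MeasurableSpace Ω]

variable {Z : Ω → ℝ} {D1 : Bool → Ω → ℝ} {D2 : Bool → Bool → Ω → ℝ}
  {Yp : Bool → Bool → Bool → Ω → ℝ} {ω : Ω}

lemma obsY_eq_potY (z : Bool) (hz : Z ω = z.toNat) : obsY Z D1 D2 Yp ω = potY D1 D2 Yp z ω := by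
  cases z <;> simp [obsY, obsD1, obsD2, potY, potD2, hz]

lemma potD2_mem_Icc {z : Bool} (hD1 : D1 z ω ∈ Set.Icc 0 1)
    (hD2 : ∀ d, D2 z d ω ∈ Set.Icc 0 1) : potD2 D1 D2 z ω ∈ Set.Icc 0 1 := by
  simpa only [potD2, smul_eq_mul, mul_comm] using
    convex_Icc (0 : ℝ) 1 (hD2 true) (hD2 false) hD1.1 (sub_nonneg.2 hD1.2)
      (add_sub_cancel _ _)

lemma potD2_of_D1_eq_zero {z : Bool} (h : D1 z ω = 0) : potD2 D1 D2 z ω = D2 z false ω := by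
  simp [potD2, h]

lemma potD2_of_D1_eq_one {z : Bool} (h : D1 z ω = 1) : potD2 D1 D2 z ω = D2 z true ω := by
  simp [potD2, h]

lemma isNonMover_of_notMem (hD1 : ∀ z, D1 z ω = 0 ∨ D1 z ω = 1)
    (hD2 : ∀ z d, D2 z d ω = 0 ∨ D2 z d ω = 1) (hmono1 : D1 false ω ≤ D1 true ω)
    (hmono2 : potD2 D1 D2 false ω ≤ potD2 D1 D2 true ω)
    (hCN : ω ∉ CNev D1 D2) (hCA : ω ∉ CAev D1 D2) (hNC : ω ∉ NCev D1 D2) (hAC : ω ∉ ACev D1 D2) :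
    IsNonMover D1 D2 ω := by
  rcases hD1 false with h0 | h0 <;> rcases hD1 true with h1 | h1
  case inl.inl =>
    rw [potD2_of_D1_eq_zero h0, potD2_of_D1_eq_zero h1] at hmono2
    have hNC' : D2 true false ω - D2 false false ω ≠ 1 := fun h => hNC ⟨h1, h0, h⟩
    have hstay : D2 true false ω = D2 false false ω := by
      rcases hD2 true false with h | h <;> rcases hD2 false false with h' | h' <;> grind
    exact .inr ⟨h1.trans h0.symm, by rw [potD2_of_D1_eq_zero h0, potD2_of_D1_eq_zero h1, hstay]⟩
  case inl.inr =>
    rw [potD2_of_D1_eq_zero h0, potD2_of_D1_eq_one h1] at hmono2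
    have hC : D1 true ω - D1 false ω = 1 := by rw [h0, h1, sub_zero]
    have hCN' : ¬(D2 true true ω = 0 ∧ D2 false false ω = 0) := fun h => hCN ⟨hC, h⟩
    have hCA' : ¬(D2 true true ω = 1 ∧ D2 false false ω = 1) := fun h => hCA ⟨hC, h⟩
    have hswitch : D2 true true ω = 1 ∧ D2 false false ω = 0 := by
      rcases hD2 true true with h | h <;> rcases hD2 false false with h' | h' <;> grind
    left
    rintro (_ | _) <;> simp [potD2, h0, h1, hswitch]
  case inr.inl => exact absurd hmono1 (by simp [h0, h1])
  case inr.inr =>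
    rw [potD2_of_D1_eq_one h0, potD2_of_D1_eq_one h1] at hmono2
    have hAC' : D2 true true ω - D2 false true ω ≠ 1 := fun h => hAC ⟨h1, h0, h⟩
    have hstay : D2 true true ω = D2 false true ω := by
      rcases hD2 true true with h | h <;> rcases hD2 false true with h' | h' <;> grind
    exact .inr ⟨h1.trans h0.symm, by rw [potD2_of_D1_eq_one h0, potD2_of_D1_eq_one h1, hstay]⟩

lemma potY_sub_potY_eq_indicator (hω : IsNonMover D1 D2 ω)
    (hexcl : ∀ d1 d2, Yp true d1 d2 ω = Yp false d1 d2 ω) :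
    potY D1 D2 Yp true ω - potY D1 D2 Yp false ω =
      (CCev D1 D2).indicator (fun ω => Yp true true true ω - Yp true false false ω) ω := by
  rcases hω with htake | ⟨hD1, hD2⟩
  · have h0 : D1 false ω = 0 := by simpa using (htake false).1
    have h1 : D1 true ω = 1 := by simpa using (htake true).1
    have hmem : ω ∈ CCev D1 D2 := by
      simp [CCev, h0, h1, ← potD2_of_D1_eq_zero h0, ← potD2_of_D1_eq_one h1, htake]
    simp [potY, htake, hmem, hexcl]
  · have hmem : ω ∉ CCev D1 D2 := fun h => by simpa [hD1] using h.1
    simp [potY, hmem, hD1, hD2, hexcl]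

end Pointwise

section Treatments

omit [MeasurableSpace Ω]

variable (Z : Ω → ℝ) (D1 : Bool → Ω → ℝ) (D2 : Bool → Bool → Ω → ℝ)

lemma obsD1_eq_obsY : obsD1 Z D1 = obsY Z D1 D2 (treatmentOutcome fun d1 _ => d1) := by
  ext ω
  simp only [obsY, treatmentOutcome, Bool.toNat_true, Bool.toNat_false]
  push_cast
  ring

lemma obsD2_eq_obsY : obsD2 Z D1 D2 = obsY Z D1 D2 (treatmentOutcome fun _ d2 => d2) := by
  ext ω
  simp only [obsY, treatmentOutcome, Bool.toNat_true, Bool.toNat_false]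
  push_cast
  ring

lemma obsDand_eq_obsY : obsDand Z D1 D2 = obsY Z D1 D2 (treatmentOutcome and) := by
  ext ω
  simp only [obsDand, obsY, treatmentOutcome, Bool.and_true, Bool.and_false, Bool.toNat_true,
    Bool.toNat_false]
  push_cast
  ring

lemma obsDor_eq_obsY : obsDor Z D1 D2 = obsY Z D1 D2 (treatmentOutcome or) := by
  ext ω
  simp only [obsDor, obsY, treatmentOutcome, Bool.or_true, Bool.or_false, Bool.toNat_true,
    Bool.toNat_false]
  push_cast
  ring

end Treatments

section ReducedForm

variable {μ : Measure Ω} {Z : Ω → ℝ} {D1 : Bool → Ω → ℝ} {D2 : Bool → Bool → Ω → ℝ}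
  {Yp : Bool → Bool → Bool → Ω → ℝ}

lemma indepFun_potY
    (hindep : IndepFun
      (fun ω => ((fun b => D1 b ω), (fun b b' => D2 b b' ω), (fun z d1 d2 => Yp z d1 d2 ω))) Z μ)
    (z : Bool) : IndepFun (potY D1 D2 Yp z) Z μ := by
  refine hindep.comp (φ := potY (fun b v => v.1 b) (fun b b' v => v.2.1 b b')
    (fun z d1 d2 v => v.2.2 z d1 d2) z) ?_ measurable_id
  unfold potY potD2
  fun_prop

lemma integrable_mul_of_mem_Icc {f d : Ω → ℝ} (hf : Integrable f μ)
    (hd : AEStronglyMeasurable d μ) (hd01 : ∀ ω, d ω ∈ Set.Icc 0 1) :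
    Integrable (fun ω => f ω * d ω) μ :=
  hf.mul_bdd (c := 1) hd <| ae_of_all _ fun ω => by
    rw [Real.norm_of_nonneg (hd01 ω).1]
    exact (hd01 ω).2

lemma integrable_potY {z : Bool} (hD1m : Measurable (D1 z)) (hD2m : ∀ d, Measurable (D2 z d))
    (hD1 : ∀ ω, D1 z ω ∈ Set.Icc 0 1) (hD2 : ∀ d ω, D2 z d ω ∈ Set.Icc 0 1)
    (hY : ∀ d1 d2, Integrable (Yp z d1 d2) μ) :
    Integrable (potY D1 D2 Yp z) μ := by
  have hpm : Measurable (potD2 D1 D2 z) := by unfold potD2; fun_prop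
  have hp (ω : Ω) : potD2 D1 D2 z ω ∈ Set.Icc 0 1 :=
    potD2_mem_Icc (hD1 ω) fun d => hD2 d ω
  have hterm {y d e : Ω → ℝ} (hy : Integrable y μ) (hdm : Measurable d) (hem : Measurable e)
      (hd : ∀ ω, d ω ∈ Set.Icc 0 1) (he : ∀ ω, e ω ∈ Set.Icc 0 1) :
      Integrable (fun ω => y ω * d ω * e ω) μ :=
    integrable_mul_of_mem_Icc (integrable_mul_of_mem_Icc hy hdm.aestronglyMeasurable hd)
      hem.aestronglyMeasurable he
  have hD1c (ω : Ω) : 1 - D1 z ω ∈ Set.Icc 0 1 := Set.Icc.one_sub_mem (hD1 ω)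
  have hpc (ω : Ω) : 1 - potD2 D1 D2 z ω ∈ Set.Icc 0 1 := Set.Icc.one_sub_mem (hp ω)
  exact (((hterm (hY true true) hD1m hpm hD1 hp).add
    (hterm (hY false true) (hD1m.const_sub 1) hpm hD1c hp)).add
    (hterm (hY true false) hD1m (hpm.const_sub 1) hD1 hpc)).add
    (hterm (hY false false) (hD1m.const_sub 1) (hpm.const_sub 1) hD1c hpc)

lemma measurableSet_CCev (hD1 : ∀ z, Measurable (D1 z)) (hD2 : ∀ z d, Measurable (D2 z d)) :
    MeasurableSet (CCev D1 D2) :=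
  (((hD1 true).sub (hD1 false)) (measurableSet_singleton 1)).inter
    (((hD2 true true).sub (hD2 false false)) (measurableSet_singleton 1))

lemma dE_obsY_eq_setIntegral [IsFiniteMeasure μ] (hZ : Measurable Z)
    (hpos : ∀ z : Bool, μ (Z ⁻¹' {(z.toNat : ℝ)}) ≠ 0)
    (hD1m : ∀ z, Measurable (D1 z)) (hD2m : ∀ z d, Measurable (D2 z d))
    (hD1 : ∀ z ω, D1 z ω ∈ Set.Icc 0 1) (hD2 : ∀ z d ω, D2 z d ω ∈ Set.Icc 0 1)
    (hY : ∀ z d1 d2, Integrable (Yp z d1 d2) μ)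
    (hindep : IndepFun
      (fun ω => ((fun b => D1 b ω), (fun b b' => D2 b b' ω), (fun z d1 d2 => Yp z d1 d2 ω))) Z μ)
    (hnm : ∀ᵐ ω ∂μ, IsNonMover D1 D2 ω)
    (hexcl : ∀ d1 d2, ∀ᵐ ω ∂μ, Yp true d1 d2 ω = Yp false d1 d2 ω) :
    dE μ Z (obsY Z D1 D2 Yp) =
      ∫ ω in CCev D1 D2, (Yp true true true ω - Yp true false false ω) ∂μ := by
  rw [dE_eq_integral_sub hZ hpos (fun z _ => obsY_eq_potY z)
      (fun z => integrable_potY (hD1m z) (hD2m z) (hD1 z) (hD2 z) (hY z)) (indepFun_potY hindep),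
    ← integral_indicator (measurableSet_CCev hD1m hD2m)]
  refine integral_congr_ae ?_
  filter_upwards [hnm, ae_all_iff.2 fun d1 => ae_all_iff.2 (hexcl d1)] with ω hω hexclω
  exact potY_sub_potY_eq_indicator hω hexclω

lemma dE_obsY_treatmentOutcome [IsFiniteMeasure μ] (hZ : Measurable Z)
    (hpos : ∀ z : Bool, μ (Z ⁻¹' {(z.toNat : ℝ)}) ≠ 0)
    (hD1m : ∀ z, Measurable (D1 z)) (hD2m : ∀ z d, Measurable (D2 z d))
    (hD1 : ∀ z ω, D1 z ω ∈ Set.Icc 0 1) (hD2 : ∀ z d ω, D2 z d ω ∈ Set.Icc 0 1)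
    (hindep : IndepFun (fun ω => ((fun b => D1 b ω), (fun b b' => D2 b b' ω))) Z μ)
    (hnm : ∀ᵐ ω ∂μ, IsNonMover D1 D2 ω)
    (δ : Bool → Bool → Bool) (hδ₀ : δ false false = false) (hδ₁ : δ true true = true) :
    dE μ Z (obsY Z D1 D2 (treatmentOutcome δ)) = (μ (CCev D1 D2)).toReal := by
  have hindepδ : IndepFun (fun ω => ((fun b => D1 b ω), (fun b b' => D2 b b' ω),
      (fun z d1 d2 => treatmentOutcome δ z d1 d2 ω))) Z μ :=
    hindep.comp (φ := fun v => (v.1, v.2, fun _ d1 d2 => ((δ d1 d2).toNat : ℝ)))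
      (measurable_fst.prodMk (measurable_snd.prodMk measurable_const)) measurable_id
  rw [dE_obsY_eq_setIntegral (Yp := treatmentOutcome δ) hZ hpos hD1m hD2m hD1 hD2
    (fun _ _ _ => integrable_const _) hindepδ hnm fun _ _ => ae_of_all _ fun _ => rfl]
  simp [treatmentOutcome, hδ₀, hδ₁, Measure.real]

end ReducedForm

lemma measure_preimage_toNat_ne_zero {μ : Measure Ω} [IsProbabilityMeasure μ] {Z : Ω → ℝ}
    (hZ : Measurable Z) (hZ01 : ∀ ω, Z ω = 0 ∨ Z ω = 1) (hpos : 0 < μ (Z ⁻¹' {1}))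
    (hlt : μ (Z ⁻¹' {1}) < 1) (z : Bool) : μ (Z ⁻¹' {(z.toNat : ℝ)}) ≠ 0 := by
  have hcompl : Z ⁻¹' {0} = (Z ⁻¹' {1})ᶜ := by
    ext ω
    rcases hZ01 ω with h | h <;> simp [h]
  cases z
  · simpa [hcompl, prob_compl_eq_zero_iff (hZ (measurableSet_singleton 1))] using hlt.ne
  · simpa using hpos.ne'

theorem stmt_5
    (μ : Measure Ω) [IsProbabilityMeasure μ]
    (Z : Ω → ℝ) (D1 : Bool → Ω → ℝ) (D2 : Bool → Bool → Ω → ℝ)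
    (Yp : Bool → Bool → Bool → Ω → ℝ)
    (hZmeas : Measurable Z)
    (hD1meas : ∀ b, Measurable (D1 b))
    (hD2meas : ∀ b b', Measurable (D2 b b'))
    (hYmeas : ∀ z d1 d2, Measurable (Yp z d1 d2))
    (hYint : ∀ z d1 d2, Integrable (Yp z d1 d2) μ)
    (hZ01 : ∀ ω, Z ω = 0 ∨ Z ω = 1)
    (hZpos : 0 < μ (Z ⁻¹' {1})) (hZlt : μ (Z ⁻¹' {1}) < 1)
    (hD101 : ∀ b ω, D1 b ω = 0 ∨ D1 b ω = 1)
    (hD201 : ∀ b b' ω, D2 b b' ω = 0 ∨ D2 b b' ω = 1)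
    (hindep : IndepFun
      (fun ω => ((fun b => D1 b ω), (fun b b' => D2 b b' ω), (fun z d1 d2 => Yp z d1 d2 ω))) Z μ)
    (hrel1 : 0 < dE μ Z (obsD1 Z D1))
    (hrel2 : 0 < dE μ Z (obsD2 Z D1 D2))
    (hrelAnd : 0 < dE μ Z (obsDand Z D1 D2))
    (hrelOr : 0 < dE μ Z (obsDor Z D1 D2))
    (hmono1 : ∀ᵐ ω ∂μ, D1 false ω ≤ D1 true ω)
    (hmono2 : ∀ᵐ ω ∂μ,
      D2 false true ω * D1 false ω + D2 false false ω * (1 - D1 false ω) ≤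
        D2 true true ω * D1 true ω + D2 true false ω * (1 - D1 true ω))
    (hexcl : ∀ d1 d2, ∀ᵐ ω ∂μ, Yp true d1 d2 ω = Yp false d1 d2 ω)
    (hCN : μ (CNev D1 D2) = 0) (hCA : μ (CAev D1 D2) = 0)
    (hNC : μ (NCev D1 D2) = 0) (hAC : μ (ACev D1 D2) = 0) :
    0 < μ (CCev D1 D2) ∧
    dE μ Z (obsY Z D1 D2 Yp) / dE μ Z (obsD1 Z D1) =
      (∫ ω in CCev D1 D2, (Yp true true true ω - Yp true false false ω) ∂μ) /
        (μ (CCev D1 D2)).toReal ∧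
    dE μ Z (obsY Z D1 D2 Yp) / dE μ Z (obsD2 Z D1 D2) =
      (∫ ω in CCev D1 D2, (Yp true true true ω - Yp true false false ω) ∂μ) /
        (μ (CCev D1 D2)).toReal ∧
    dE μ Z (obsY Z D1 D2 Yp) / dE μ Z (obsDand Z D1 D2) =
      (∫ ω in CCev D1 D2, (Yp true true true ω - Yp true false false ω) ∂μ) /
        (μ (CCev D1 D2)).toReal ∧
    dE μ Z (obsY Z D1 D2 Yp) / dE μ Z (obsDor Z D1 D2) =
      (∫ ω in CCev D1 D2, (Yp true true true ω - Yp true false false ω) ∂μ) /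
        (μ (CCev D1 D2)).toReal := by
  have hZz := measure_preimage_toNat_ne_zero hZmeas hZ01 hZpos hZlt
  have hIcc {x : ℝ} (hx : x = 0 ∨ x = 1) : x ∈ Set.Icc 0 1 := by rcases hx with rfl | rfl <;> simp
  have hD1Icc (z : Bool) (ω : Ω) := hIcc (hD101 z ω)
  have hD2Icc (z d : Bool) (ω : Ω) := hIcc (hD201 z d ω)
  have hnm : ∀ᵐ ω ∂μ, IsNonMover D1 D2 ω := by
    filter_upwards [hmono1, hmono2, measure_eq_zero_iff_ae_notMem.1 hCN,
      measure_eq_zero_iff_ae_notMem.1 hCA, measure_eq_zero_iff_ae_notMem.1 hNC,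
      measure_eq_zero_iff_ae_notMem.1 hAC] with ω h1 h2
    exact isNonMover_of_notMem (fun z => hD101 z ω) (fun z d => hD201 z d ω) h1 h2
  have hfirst := dE_obsY_treatmentOutcome hZmeas hZz hD1meas hD2meas hD1Icc hD2Icc
    (hindep.comp (measurable_fst.prodMk measurable_snd.fst) measurable_id) hnm
  rw [obsD1_eq_obsY Z D1 D2, hfirst _ rfl rfl] at hrel1
  rw [obsD1_eq_obsY Z D1 D2, obsD2_eq_obsY, obsDand_eq_obsY, obsDor_eq_obsY,
    hfirst _ rfl rfl, hfirst _ rfl rfl, hfirst and rfl rfl, hfirst or rfl rfl,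
    dE_obsY_eq_setIntegral hZmeas hZz hD1meas hD2meas hD1Icc hD2Icc hYint hindep hnm hexcl]
  exact ⟨(ENNReal.toReal_pos_iff.1 hrel1).1, rfl, rfl, rfl, rfl⟩
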